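/- (Optimality of the constant 1/2 in classical universal testing.) Fix ε ∈ (0,1) and C > 1/2. Then there exist distinct probability distributions P₀ and P₁ on the two-element alphabet {0,1} such that for every sequence of acceptance regions A_n ⊆ {0,1}^n satisfying P₀^{⊗n}(A_n) ≥ 1 − ε for all n (type I error at most ε), one has liminf_{n→∞} −(1/n)·ln P₁^{⊗n}(A_n) < C·(|P₀(0) − P₁(0)| + |P₀(1) − P₁(1)|)². Equivalently, no test achieving type I error at most ε can attain the type II error exponent C·‖P₀ − P₁‖₁² for all pairs of distributions when C > 1/2. -/

import Mathlib

open MeasureTheory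

lemma aux_pi_real (P : Measure Bool) [IsProbabilityMeasure P] (n : ℕ) (A : Set (Fin n → Bool))
    [DecidablePred (· ∈ A)] :
    (Measure.pi (fun _ : Fin n => P) A).toReal
      = ∑ x : Fin n → Bool, if x ∈ A then ∏ i, (P {x i}).toReal else 0 := by
  have h : A = ((Finset.univ.filter (· ∈ A) : Finset (Fin n → Bool)) : Set (Fin n → Bool)) := by
    ext x; simp
  conv_lhs => rw [h]
  rw [← sum_measure_singleton, ENNReal.toReal_sum (fun _ _ => measure_ne_top _ _),
    Finset.sum_filter]
  refine Finset.sum_congr rfl fun x _ => ?_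
  rw [Measure.pi_singleton, ENNReal.toReal_prod]

lemma aux_core (P Q : Measure Bool) [IsProbabilityMeasure P] [IsProbabilityMeasure Q]
    (hP : ∀ b, 0 < (P {b}).toReal) (hQ : ∀ b, 0 < (Q {b}).toReal)
    (n : ℕ) (A : Set (Fin n → Bool)) (s κ : ℝ) (hs : 0 < s) :
    (Measure.pi (fun _ : Fin n => P) A).toReal ≤
      (Measure.pi (fun _ : Fin n => Q) A).toReal * Real.exp (n * κ) +
      (∑ b : Bool, (P {b}).toReal * (Real.exp (-κ) * ((P {b}).toReal / (Q {b}).toReal)) ^ s) ^ n := by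
  classical
  rw [aux_pi_real, aux_pi_real]
  have h1 : (∑ b : Bool, (P {b}).toReal * (Real.exp (-κ) * ((P {b}).toReal / (Q {b}).toReal)) ^ s) ^ n
      = ∑ x : Fin n → Bool, ∏ i, ((P {x i}).toReal *
        (Real.exp (-κ) * ((P {x i}).toReal / (Q {x i}).toReal)) ^ s) := by
    have := Fintype.sum_pow (fun b : Bool => (P {b}).toReal *
      (Real.exp (-κ) * ((P {b}).toReal / (Q {b}).toReal)) ^ s) n
    exact this
  rw [h1, Finset.sum_mul, ← Finset.sum_add_distrib]
  refine Finset.sum_le_sum fun x _ => ?_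
  have hp : 0 < ∏ i, (P {x i}).toReal := Finset.prod_pos fun i _ => hP _
  have hq : 0 < ∏ i, (Q {x i}).toReal := Finset.prod_pos fun i _ => hQ _
  have e1 : ∏ i, ((P {x i}).toReal *
        (Real.exp (-κ) * ((P {x i}).toReal / (Q {x i}).toReal)) ^ s)
      = (∏ i, (P {x i}).toReal) *
        ((∏ i, (P {x i}).toReal) / ((∏ i, (Q {x i}).toReal) * Real.exp (n * κ))) ^ s := by
    rw [Finset.prod_mul_distrib, Real.finsetProd_rpow]
    · congr 2
      rw [Finset.prod_mul_distrib, Finset.prod_div_distrib, Finset.prod_const, Finset.card_univ,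
        Fintype.card_fin, ← Real.exp_nat_mul, mul_neg, Real.exp_neg]
      field_simp
    · intro i _
      have := hP (x i); have := hQ (x i); positivity
  rw [e1]
  generalize (∏ i, (P {x i}).toReal) = p at *
  generalize (∏ i, (Q {x i}).toReal) = q at *
  have hE := Real.exp_pos (n * κ)
  have hnn : 0 ≤ p * (p / (q * Real.exp (n * κ))) ^ s := by positivity
  split_ifs
  · rcases le_total p (q * Real.exp (n * κ)) with h | h
    · linarith
    · have : 1 ≤ (p / (q * Real.exp (n * κ))) ^ s :=
        Real.one_le_rpow ((one_le_div (by positivity)).2 h) hs.le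
      have : 0 < q * Real.exp (n * κ) := by positivity
      nlinarith
  · linarith

lemma aux_s (x κ : ℝ) (hx : 0 < x) (hx1 : x < 1) (hκ : 1 / (2 * (1 - x ^ 2)) * x ^ 2 < κ) :
    ∃ s : ℝ, 0 < s ∧ 1 / 2 * (Real.exp (-κ) * (1 / (1 + x))) ^ s +
      1 / 2 * (Real.exp (-κ) * (1 / (1 - x))) ^ s < 1 := by
  have ha : 0 < Real.exp (-κ) * (1 / (1 + x)) := by positivity
  have hb : 0 < Real.exp (-κ) * (1 / (1 - x)) := by
    have : 0 < 1 - x := by linarith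
    positivity
  set a := Real.exp (-κ) * (1 / (1 + x)) with hadef
  set b := Real.exp (-κ) * (1 / (1 - x)) with hbdef
  have hd : HasDerivAt (fun s : ℝ => 1 / 2 * a ^ s + 1 / 2 * b ^ s)
      (1 / 2 * (a ^ (0:ℝ) * Real.log a) + 1 / 2 * (b ^ (0:ℝ) * Real.log b)) 0 := by
    exact ((Real.hasStrictDerivAt_const_rpow ha 0).hasDerivAt.const_mul _).add
      ((Real.hasStrictDerivAt_const_rpow hb 0).hasDerivAt.const_mul _)
  have hneg : (1 / 2 * (a ^ (0:ℝ) * Real.log a) + 1 / 2 * (b ^ (0:ℝ) * Real.log b)) < 0 := by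
    have h1 : 0 < 1 - x := by linarith
    have h2 : 0 < 1 + x := by linarith
    rw [Real.rpow_zero, Real.rpow_zero, hadef, hbdef, Real.log_mul (Real.exp_ne_zero _) (by positivity),
      Real.log_mul (Real.exp_ne_zero _) (by positivity), Real.log_exp, one_div (1+x), one_div (1-x),
      Real.log_inv, Real.log_inv]
    have h3 : 0 < 1 - x ^ 2 := by nlinarith
    have h4 := Real.one_sub_inv_le_log_of_pos h3
    have h5 : Real.log (1 - x ^ 2) = Real.log (1 + x) + Real.log (1 - x) := by
      rw [← Real.log_mul h2.ne' h1.ne']; congr 1; ring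
    have h6 : 1 / (2 * (1 - x ^ 2)) * x ^ 2 = ((1 - x ^ 2)⁻¹ - 1) / 2 := by field_simp; ring
    linarith
  have ht := hd.tendsto_slope
  have ht2 := ht.mono_left (nhdsWithin_mono (0:ℝ) (s := Set.Ioi 0) (fun y hy => ne_of_gt hy))
  have hev := (ht2.eventually (gt_mem_nhds hneg)).and self_mem_nhdsWithin
  obtain ⟨s, hs1, hs0⟩ := hev.exists
  have hs0 : 0 < s := hs0
  refine ⟨s, hs0, ?_⟩
  rw [slope_def_field, Real.rpow_zero, Real.rpow_zero, sub_zero, div_lt_iff₀ hs0] at hs1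
  linarith

lemma aux_measure (a : ℝ) (h0 : 0 ≤ a) (h1 : a ≤ 1) :
    ∃ P : Measure Bool, IsProbabilityMeasure P ∧ (P {false}).toReal = a ∧
      (P {true}).toReal = 1 - a := by
  refine ⟨ENNReal.ofReal a • Measure.dirac false + ENNReal.ofReal (1 - a) • Measure.dirac true,
    ⟨?_⟩, ?_, ?_⟩
  · simp [← ENNReal.ofReal_add h0 (sub_nonneg.2 h1)]
  · simp [h0]
  · simp [h1]

theorem no_test_beats_half_constant
    (ε C : ℝ) (hε : ε ∈ Set.Ioo (0 : ℝ) 1) (hC : 1 / 2 < C) :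
    ∃ P₀ P₁ : Measure Bool, IsProbabilityMeasure P₀ ∧ IsProbabilityMeasure P₁ ∧ P₀ ≠ P₁ ∧
      ∀ A : (n : ℕ) → Set (Fin n → Bool),
        (∀ n, MeasurableSet (A n)) →
        (∀ n, ENNReal.ofReal (1 - ε) ≤ Measure.pi (fun _ : Fin n => P₀) (A n)) →
        Filter.liminf
            (fun n : ℕ =>
              -(1 / (n : ℝ)) * Real.log ((Measure.pi (fun _ : Fin n => P₁) (A n)).toReal))
            Filter.atTop <
          C * (|(P₀ {false}).toReal - (P₁ {false}).toReal| +
                |(P₀ {true}).toReal - (P₁ {true}).toReal|) ^ 2 := by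
  obtain ⟨hε0, hε1⟩ := hε
  obtain ⟨C2, hC2, hC2C⟩ := exists_between hC
  obtain ⟨C1, hC1, hC12⟩ := exists_between hC2
  obtain ⟨C0, hC0, hC01⟩ := exists_between hC1
  have hC0' : 1 / (2 * C0) < 1 := by rw [div_lt_one (by linarith)]; linarith
  have hC0p : 0 < 1 / (2 * C0) := by positivity
  obtain ⟨x, hx0, hx1, hxx⟩ : ∃ x : ℝ, 0 < x ∧ x < 1 ∧ x ^ 2 = 1 - 1 / (2 * C0) := by
    refine ⟨Real.sqrt (1 - 1 / (2 * C0)), Real.sqrt_pos.2 (by linarith), ?_,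
      Real.sq_sqrt (by linarith)⟩
    rw [Real.sqrt_lt' one_pos]; linarith
  have hx2 : 0 < x ^ 2 := by positivity
  obtain ⟨s, hs, hr⟩ := aux_s x (C1 * x ^ 2) hx0 hx1 (by
    have : 1 / (2 * (1 - x ^ 2)) = C0 := by
      rw [hxx]; field_simp; ring
    rw [this]; gcongr)
  obtain ⟨P, hPp, hPf, hPt⟩ := aux_measure (1 / 2) (by norm_num) (by norm_num)
  obtain ⟨Q, hQp, hQf, hQt⟩ := aux_measure ((1 - x) / 2) (by linarith) (by linarith)
  refine ⟨P, Q, hPp, hQp, ?_, ?_⟩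
  · rintro rfl
    linarith
  intro A _ hA
  have hnorm : (|(P {false}).toReal - (Q {false}).toReal| +
                |(P {true}).toReal - (Q {true}).toReal|) ^ 2 = x ^ 2 := by
    rw [hPf, hQf, hPt, hQt]
    have e1 : (1:ℝ) / 2 - (1 - x) / 2 = x / 2 := by ring
    have e2 : (1:ℝ) - 1 / 2 - (1 - (1 - x) / 2) = - (x / 2) := by ring
    rw [e1, e2, abs_neg, abs_of_pos (by positivity)]; ring
  rw [hnorm]
  refine lt_of_le_of_lt ?_ (mul_lt_mul_of_pos_right hC2C hx2)
  set r : ℝ := ∑ b : Bool, (P {b}).toReal *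
    (Real.exp (-(C1 * x ^ 2)) * ((P {b}).toReal / (Q {b}).toReal)) ^ s with hrdef
  have hr0 : 0 ≤ r := by
    rw [hrdef]; positivity
  have hr1 : r < 1 := by
    rw [hrdef, Fintype.sum_bool, hPf, hQf, hPt, hQt]
    have : (1 - x) ≠ 0 := by linarith
    have e1 : (1:ℝ) / 2 / ((1 - x) / 2) = 1 / (1 - x) := by field_simp
    have e2 : (1 - (1:ℝ) / 2) / (1 - (1 - x) / 2) = 1 / (1 + x) := by
      have : 1 - (1 - x) / 2 = (1 + x) / 2 := by ring
      rw [this]; field_simp; norm_num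
    rw [e1, e2]
    norm_num at hr ⊢
    exact hr
  have hcore := fun n => aux_core P Q (by rintro (_ | _) <;> simp only [hPf, hPt] <;> norm_num)
    (by rintro (_ | _) <;> simp only [hQf, hQt] <;> linarith) n (A n) s (C1 * x ^ 2) hs
  set c := (1 - ε) / 2 with hc
  have hc0 : 0 < c := by rw [hc]; linarith
  have hev1 : ∀ᶠ n : ℕ in Filter.atTop, r ^ n < c :=
    (tendsto_pow_atTop_nhds_zero_of_lt_one hr0 hr1).eventually (gt_mem_nhds hc0)
  have hev2 : ∀ᶠ n : ℕ in Filter.atTop, -Real.log c / (n : ℝ) < (C2 - C1) * x ^ 2 :=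
    (tendsto_const_div_atTop_nhds_zero_nat _).eventually
      (gt_mem_nhds (mul_pos (by linarith) hx2))
  have hev : ∀ᶠ n : ℕ in Filter.atTop,
      -(1 / (n : ℝ)) * Real.log ((Measure.pi (fun _ : Fin n => Q) (A n)).toReal) ≤ C2 * x ^ 2 := by
    filter_upwards [hev1, hev2, Filter.eventually_gt_atTop 0] with n h1 h2 hn
    have hn' : (0:ℝ) < n := by exact_mod_cast hn
    have hPA : 1 - ε ≤ (Measure.pi (fun _ : Fin n => P) (A n)).toReal :=
      (ENNReal.ofReal_le_iff_le_toReal (measure_ne_top _ _)).1 (hA n)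
    have h3 := hcore n
    rw [← hrdef] at h3
    generalize (Measure.pi (fun _ : Fin n => Q) (A n)).toReal = y at *
    have hE := Real.exp_pos (n * (C1 * x ^ 2))
    have h4 : c ≤ y * Real.exp (n * (C1 * x ^ 2)) := by linarith
    have hy : 0 < y := by
      by_contra h
      nlinarith
    have h5 := Real.log_le_log hc0 h4
    rw [Real.log_mul hy.ne' hE.ne', Real.log_exp] at h5
    rw [div_lt_iff₀ hn'] at h2
    have : -(1 / (n : ℝ)) * Real.log y = (-Real.log y) / n := by ring
    rw [this, div_le_iff₀ hn']
    nlinarith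
  refine Filter.liminf_le_of_le ?_ ?_
  · refine ⟨0, Filter.eventually_map.2 (Filter.Eventually.of_forall fun n => ?_)⟩
    have : Real.log ((Measure.pi (fun _ : Fin n => Q) (A n)).toReal) ≤ 0 :=
      Real.log_nonpos ENNReal.toReal_nonneg measureReal_le_one
    have h2 : 0 ≤ 1 / (n : ℝ) := by positivity
    show 0 ≤ _
    nlinarith
  · intro b hb
    obtain ⟨n, h1, h2⟩ := (hb.and hev).exists
    exact h1.trans h2
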